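/- arXiv:2602.07210 — 3 statements merged into one kernel-verified Lean document; each statement's English description precedes it below -/
import Mathlib

section
/- Let G be a simple non-commutative group and T a nonempty finite set. A subgroup H of the direct power G^T is normalized by the full diagonal subgroup Δ^T(G) = {(g)_{σ∈T} : g ∈ G} if and only if H is a product of diagonals, i.e., there exist an integer r ≥ 0 and pairwise disjoint nonempty subsets T_1, …, T_r of T such that H = ∏_{i=1}^r Δ^{T_i}(G). -/
/-!
Suppose `H` is normalized by the full diagonal. For every coordinate `σ`, the projection of a
diagonal-invariant subgroup to the factor `σ` is normal in `G`, hence trivial or everything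
(`proj_surjective`). Call `σ` and `τ` equivalent if every `h ∈ H` satisfies `h σ = h τ`, and call
`σ` active if some `h ∈ H` has `h σ ≠ 1`. The blocks `T_i` are the classes of active coordinates.

The main point is that an active `σ` can be separated from every `τ` not equivalent to it by an
`h ∈ H` with `h σ ≠ 1` and `h τ = 1` (`exists_separating`). Otherwise `h τ` determines `h σ`;
comparing the conjugates of `k ∈ H` by `h` and by the constant tuple `h τ` shows that
`(h τ)⁻¹ * h σ` is central, so `h σ = h τ` since the center is trivial. Commutators of such elements
vanish at several inequivalent coordinates at once (`exists_separating_finset`), so `H` contains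
the partial diagonal of each active class (`single_class_mem`), and therefore their product
(`mem_of_respects`).
-/

namespace ProductOfDiagonals

variable {G T : Type*} [Group G]

/-- `H` is normalized by the full diagonal subgroup of `G^T`. -/
def DiagInvariant (H : Subgroup (T → G)) : Prop :=
  ∀ g : G, ∀ h ∈ H, (fun σ => g * h σ * g⁻¹) ∈ H

/-- Two coordinates are equivalent when all members of `H` agree on them. -/
def coordSetoid (H : Subgroup (T → G)) : Setoid T where
  r σ τ := ∀ h ∈ H, h σ = h τ
  iseqv := ⟨fun _ _ _ => rfl, fun p h hh => (p h hh).symm,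
    fun p q h hh => (p h hh).trans (q h hh)⟩

/-- The subgroup of elements of `H` that are trivial on `A`. -/
def vanishing (H : Subgroup (T → G)) (A : Set T) : Subgroup (T → G) where
  carrier := {h | h ∈ H ∧ ∀ τ ∈ A, h τ = 1}
  one_mem' := ⟨H.one_mem, fun _ _ => rfl⟩
  mul_mem' := fun {a b} ha hb => ⟨H.mul_mem ha.1 hb.1, fun τ hτ => by
    simp [ha.2 τ hτ, hb.2 τ hτ]⟩
  inv_mem' := fun {a} ha => ⟨H.inv_mem ha.1, fun τ hτ => by simp [ha.2 τ hτ]⟩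

lemma DiagInvariant.vanishing {H : Subgroup (T → G)} (hH : DiagInvariant H) (A : Set T) :
    DiagInvariant (vanishing H A) :=
  fun g h hh => ⟨hH g h hh.1, fun τ hτ => by simp [hh.2 τ hτ]⟩

variable [IsSimpleGroup G]

lemma eq_one_of_central (hnc : ∃ a b : G, a * b ≠ b * a) {x : G}
    (hx : ∀ y, y * x = x * y) : x = 1 := by
  rcases (inferInstance : (Subgroup.center G).Normal).eq_bot_or_eq_top with h | h
  · have : x ∈ Subgroup.center G := Subgroup.mem_center_iff.2 hx
    rwa [h, Subgroup.mem_bot] at this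
  · obtain ⟨a, b, hab⟩ := hnc
    have : b ∈ Subgroup.center G := h ▸ Subgroup.mem_top b
    exact absurd (Subgroup.mem_center_iff.1 this a) hab

lemma proj_surjective {H : Subgroup (T → G)} (hH : DiagInvariant H) {σ : T}
    (hσ : ∃ h ∈ H, h σ ≠ 1) (g : G) : ∃ h ∈ H, h σ = g := by
  have hn : (H.map (Pi.evalMonoidHom (fun _ : T => G) σ)).Normal := by
    constructor
    rintro _ ⟨h, hh, rfl⟩ g
    exact ⟨_, hH g h hh, rfl⟩
  rcases hn.eq_bot_or_eq_top with h | h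
  · obtain ⟨k, hk, hk1⟩ := hσ
    have : k σ ∈ H.map (Pi.evalMonoidHom (fun _ : T => G) σ) := ⟨k, hk, rfl⟩
    rw [h, Subgroup.mem_bot] at this
    exact absurd this hk1
  · have : g ∈ H.map (Pi.evalMonoidHom (fun _ : T => G) σ) := h ▸ Subgroup.mem_top g
    exact this

lemma exists_separating (hnc : ∃ a b : G, a * b ≠ b * a) {H : Subgroup (T → G)}
    (hH : DiagInvariant H) {σ τ : T} (hσ : ∃ h ∈ H, h σ ≠ 1) (hστ : ¬ coordSetoid H σ τ) :
    ∃ h ∈ H, h σ ≠ 1 ∧ h τ = 1 := by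
  by_contra! hno
  replace hno : ∀ h ∈ H, h τ = 1 → h σ = 1 := fun h hh h1 => by
    by_contra h2
    exact hno h hh h2 h1
  refine hστ fun h hh => ?_
  have hc : (h τ)⁻¹ * h σ = 1 := by
    refine eq_one_of_central hnc fun y => ?_
    obtain ⟨k, hk, rfl⟩ := proj_surjective hH hσ y
    -- The conjugates of `k` by `h` and by the constant tuple `h τ` agree at `τ`, hence at `σ`.
    have key := hno _ (H.mul_mem (hH (h τ) k hk)
      (H.inv_mem (H.mul_mem (H.mul_mem hh hk) (H.inv_mem hh)))) (by simp)
    have key' : h τ * k σ * (h τ)⁻¹ = h σ * k σ * (h σ)⁻¹ := mul_inv_eq_one.1 key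
    calc k σ * ((h τ)⁻¹ * h σ) = (h τ)⁻¹ * (h τ * k σ * (h τ)⁻¹) * h σ := by group
      _ = (h τ)⁻¹ * h σ * k σ := by rw [key']; group
  exact (inv_mul_eq_one.1 hc).symm

lemma exists_separating_finset (hnc : ∃ a b : G, a * b ≠ b * a) {H : Subgroup (T → G)}
    (hH : DiagInvariant H) {σ : T} (hσ : ∃ h ∈ H, h σ ≠ 1) (A : Finset T)
    (hA : ∀ τ ∈ A, ¬ coordSetoid H σ τ) :
    ∃ h ∈ vanishing H (A : Set T), h σ ≠ 1 := by
  classical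
  induction A using Finset.induction_on with
  | empty =>
    obtain ⟨h, hh, h1⟩ := hσ
    exact ⟨h, ⟨hh, by simp⟩, h1⟩
  | insert τ A _ ih =>
    have ih' := ih fun ρ hρ => hA ρ (Finset.mem_insert_of_mem hρ)
    obtain ⟨k, hk, hk1, hkτ⟩ := exists_separating hnc hH hσ (hA τ (Finset.mem_insert_self _ _))
    obtain ⟨y, hy⟩ : ∃ y, y * k σ ≠ k σ * y := by
      by_contra! hcon
      exact hk1 (eq_one_of_central hnc hcon)
    obtain ⟨h, hh, rfl⟩ := proj_surjective (hH.vanishing _) ih' y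
    -- The commutator of `h` and `k` vanishes wherever one of them does, but not at `σ`.
    refine ⟨h * k * h⁻¹ * k⁻¹, ⟨H.mul_mem (H.mul_mem (H.mul_mem hh.1 hk) (H.inv_mem hh.1))
      (H.inv_mem hk), fun ρ hρ => ?_⟩, fun h1 => hy ?_⟩
    · rcases Finset.mem_insert.1 (Finset.mem_coe.1 hρ) with rfl | hρ
      · simp [hkτ]
      · simp [hh.2 ρ hρ]
    · exact mul_inv_eq_iff_eq_mul.1 (mul_inv_eq_one.1 h1)

open Classical in
/-- `H` contains the partial diagonal of the class of every active coordinate. -/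
lemma single_class_mem [Fintype T] (hnc : ∃ a b : G, a * b ≠ b * a) {H : Subgroup (T → G)}
    (hH : DiagInvariant H) {σ : T} (hσ : ∃ h ∈ H, h σ ≠ 1) (g : G) :
    (fun τ => if coordSetoid H σ τ then g else 1) ∈ H := by
  obtain ⟨h, hh, rfl⟩ := proj_surjective (hH.vanishing _) (exists_separating_finset hnc hH hσ
    (Finset.univ.filter fun τ => ¬ coordSetoid H σ τ) (by simp)) g
  convert hh.1 using 1
  funext τ
  split_ifs with hτ
  · exact hτ h hh.1
  · exact (hh.2 τ (by simpa using hτ)).symm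

lemma mem_of_respects [Fintype T] (hnc : ∃ a b : G, a * b ≠ b * a) {H : Subgroup (T → G)}
    (hH : DiagInvariant H) (f : T → G) (hf : ∀ σ τ, coordSetoid H σ τ → f σ = f τ)
    (hf1 : ∀ σ, (¬ ∃ h ∈ H, h σ ≠ 1) → f σ = 1) : f ∈ H := by
  classical
  -- Multiply the restrictions of `f` to the individual classes, one class at a time.
  have key : ∀ A : Finset (Quotient (coordSetoid H)),
      (fun σ => if Quotient.mk (coordSetoid H) σ ∈ A then f σ else 1) ∈ H := by
    intro A
    induction A using Finset.induction_on with
    | empty =>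
      simp only [Finset.notMem_empty, if_false]
      exact H.one_mem
    | insert q A hq ih =>
      induction q using Quotient.inductionOn with | _ ρ
      by_cases hρ : ∃ h ∈ H, h ρ ≠ 1
      · convert H.mul_mem ih (single_class_mem hnc hH hρ (f ρ)) using 1
        funext τ
        by_cases h : coordSetoid H ρ τ
        · have e : Quotient.mk (coordSetoid H) τ = Quotient.mk _ ρ := (Quotient.sound h).symm
          simp [e, hq, h, hf ρ τ h]
        · have e : Quotient.mk (coordSetoid H) τ ≠ Quotient.mk _ ρ :=
            fun e => h (Quotient.exact e.symm)
          simp [e, h]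
      · convert ih using 1
        funext τ
        by_cases h : coordSetoid H ρ τ
        · simp [← hf ρ τ h, hf1 ρ hρ]
        · have e : Quotient.mk (coordSetoid H) τ ≠ Quotient.mk _ ρ :=
            fun e => h (Quotient.exact e.symm)
          simp [e]
  simpa using key Finset.univ

end ProductOfDiagonals

open ProductOfDiagonals in
/-- Let `G` be a simple non-commutative group and `T` a nonempty finite set.
A subgroup `H` of the direct power `G^T` is normalized by the full diagonal subgroup
`Δ^T(G)` if and only if `H` is a product of diagonals, i.e. there exist pairwise disjoint
nonempty subsets `T_1, …, T_r` of `T` such that `H = ∏_{i=1}^r Δ^{T_i}(G)`. -/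
theorem product_of_diagonals {G : Type*} [Group G] [IsSimpleGroup G]
    (hnc : ∃ a b : G, a * b ≠ b * a)
    {T : Type*} [Fintype T] [Nonempty T]
    (H : Subgroup (T → G)) :
    (∀ g : G, ∀ h ∈ H, (fun σ => g * h σ * g⁻¹) ∈ H) ↔
      ∃ (r : ℕ) (Ts : Fin r → Set T),
        (∀ i, (Ts i).Nonempty) ∧
        (Pairwise fun i j => Disjoint (Ts i) (Ts j)) ∧
        (∀ f : T → G, f ∈ H ↔
          ∃ c : Fin r → G,
            (∀ i, ∀ σ ∈ Ts i, f σ = c i) ∧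
            (∀ σ, (∀ i, σ ∉ Ts i) → f σ = 1)) := by
  classical
  constructor
  · intro hH
    -- The blocks are the classes on which some member of `H` is nontrivial.
    let Q := {q : Quotient (coordSetoid H) // ∃ σ, Quotient.mk _ σ = q ∧ ∃ h ∈ H, h σ ≠ 1}
    obtain ⟨r, ⟨e⟩⟩ := Finite.exists_equiv_fin Q
    refine ⟨r, fun i => {σ | Quotient.mk _ σ = (e.symm i).1}, fun i => ?_, fun i j hij => ?_,
      fun f => ⟨fun hf => ?_, ?_⟩⟩
    · obtain ⟨σ, hσ, _⟩ := (e.symm i).2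
      exact ⟨σ, hσ⟩
    · refine Set.disjoint_left.2 fun σ hi hj => hij ?_
      exact e.symm.injective (Subtype.ext (hi.symm.trans hj))
    · refine ⟨fun i => f (e.symm i).1.out, fun i σ hσ => ?_, fun σ hσ => ?_⟩
      · have : Quotient.mk (coordSetoid H) σ = Quotient.mk _ (e.symm i).1.out :=
          Eq.trans hσ (Quotient.out_eq _).symm
        exact Quotient.exact this f hf
      · by_contra h1
        exact hσ (e ⟨_, σ, rfl, f, hf, h1⟩) (by simp)
    · rintro ⟨c, hc, hc1⟩
      have off : ∀ σ, (¬ ∃ h ∈ H, h σ ≠ 1) → f σ = 1 := by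
        refine fun σ hσ => hc1 σ fun i hi => hσ ?_
        obtain ⟨ρ, hρ, h, hh, h1⟩ := (e.symm i).2
        have hr : coordSetoid H ρ σ := Quotient.exact (hρ.trans (Eq.symm hi))
        exact ⟨h, hh, hr h hh ▸ h1⟩
      refine mem_of_respects hnc hH f (fun σ τ hστ => ?_) off
      by_cases hσ : ∃ h ∈ H, h σ ≠ 1
      · rw [hc (e ⟨_, σ, rfl, hσ⟩) σ (by simp), hc (e ⟨_, σ, rfl, hσ⟩) τ
          (by simpa using (Quotient.sound hστ).symm)]
      · rw [off σ hσ, off τ]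
        rintro ⟨h, hh, h1⟩
        exact hσ ⟨h, hh, (hστ h hh).symm ▸ h1⟩
  · rintro ⟨r, Ts, -, -, hmem⟩ g h hh
    obtain ⟨c, hc, hc1⟩ := (hmem h).1 hh
    exact (hmem _).2 ⟨fun i => g * c i * g⁻¹, fun i σ hσ => by simp [hc i σ hσ],
      fun σ hσ => by simp [hc1 σ hσ]⟩
end

section
/- Let G = ∏_{j=1}^t G^{(j)} be a finite direct product of groups, where each G^{(j)} is simple and non-commutative, and let T be a nonempty finite set. If a subgroup H of G^T is normalized by the full diagonal subgroup Δ^T(G), then H factors through the simple factors: every element h ∈ H can be written as h = h_1 h_2 ⋯ h_t with h_j ∈ H ∩ (G^{(j)})^T for each j; equivalently, H = ∏_{j=1}^t (H ∩ (G^{(j)})^T). -/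
/-!
Fix `h ∈ H` and an index `j`, put `S = G^{(j)}`, and let `p : T → S` be the `j`-th component
of `h`. The subgroup `M = H ∩ S^T` of `S^T` is normalized by the diagonal of `S` and by `p`
(conjugation by `h` acts on `S^T` as conjugation by `p`), and it contains all commutators `[g, p]`
with `g` diagonal in `S`. It suffices to deduce `p ∈ M` (`mem_of_commutators_mem`), since `h` is the
product of its components.

Elements of `S^T` that are constant on the level sets of `p` form a power of `S` indexed by the
range of `p`, so `p` may be taken injective. If `p σ ≠ 1`, the elements of `M` vanishing on a
finite set `F` of other coordinates project onto `S` at `σ` (`exists_mem_of_injective`). For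
`F = ∅` this holds because the projection is normal in `S` and contains `[g, p σ] ≠ 1` for some `g`.
To add a coordinate `τ` to `F`, take the commutator with `q = (p τ)⁻¹ p`, which normalizes `M`,
is trivial at `τ` and, by injectivity, nontrivial at `σ`. Hence `M` contains the full coordinate
subgroup at each `σ` with `p σ ≠ 1`, and so it contains `p`.
-/

/-- The centre of a simple non-commutative group is trivial. -/
theorem exists_commutator_ne_one {S : Type*} [Group S] [IsSimpleGroup S]
    (hnc : ∃ a b : S, a * b ≠ b * a) {s : S} (hs : s ≠ 1) :
    ∃ g : S, g * s * g⁻¹ * s⁻¹ ≠ 1 := by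
  by_contra! hcon
  have hmem : s ∈ Subgroup.center S := by
    rw [Subgroup.mem_center_iff]
    intro g
    have h1 := hcon g
    rw [mul_inv_eq_one, mul_inv_eq_iff_eq_mul] at h1
    exact h1
  obtain ⟨a, b, hab⟩ := hnc
  rcases (inferInstance : (Subgroup.center S).Normal).eq_bot_or_eq_top with h | h
  · rw [h, Subgroup.mem_bot] at hmem
    exact hs hmem
  · have hb : b ∈ Subgroup.center S := h ▸ Subgroup.mem_top b
    exact hab (Subgroup.mem_center_iff.1 hb a)

/-- The elements of `M` that vanish on `F` have a normal projection at `σ`, so one of them with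
nontrivial value at `σ` forces the projection to be everything. -/
theorem exists_of_ne_one {S T : Type*} [Group S] [IsSimpleGroup S] (M : Subgroup (T → S))
    (hdiag : ∀ g : S, ∀ x ∈ M, (fun σ => g * x σ * g⁻¹) ∈ M) (F : Finset T) (σ : T)
    {x : T → S} (hx : x ∈ M) (hxF : ∀ τ ∈ F, x τ = 1) (hxσ : x σ ≠ 1) (s : S) :
    ∃ y ∈ M, (∀ τ ∈ F, y τ = 1) ∧ y σ = s := by
  let A : Subgroup S :=
    { carrier := {s | ∃ y ∈ M, (∀ τ ∈ F, y τ = 1) ∧ y σ = s}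
      one_mem' := ⟨1, M.one_mem, fun _ _ => rfl, rfl⟩
      mul_mem' := by
        rintro _ _ ⟨y, hy, hyF, rfl⟩ ⟨z, hz, hzF, rfl⟩
        exact ⟨y * z, M.mul_mem hy hz, fun τ hτ => by simp [hyF τ hτ, hzF τ hτ], rfl⟩
      inv_mem' := by
        rintro _ ⟨y, hy, hyF, rfl⟩
        exact ⟨y⁻¹, M.inv_mem hy, fun τ hτ => by simp [hyF τ hτ], rfl⟩ }
  have hA : A.Normal := by
    constructor
    rintro _ ⟨y, hy, hyF, rfl⟩ g
    exact ⟨_, hdiag g y hy, fun τ hτ => by simp [hyF τ hτ], rfl⟩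
  have hxA : x σ ∈ A := ⟨x, hx, hxF, rfl⟩
  rcases hA.eq_bot_or_eq_top with h | h
  · rw [h, Subgroup.mem_bot] at hxA
    exact absurd hxA hxσ
  · have hs : s ∈ A := h ▸ Subgroup.mem_top s
    exact hs

theorem exists_mem_of_injective {S T : Type*} [Group S] [IsSimpleGroup S]
    (hnc : ∃ a b : S, a * b ≠ b * a) (M : Subgroup (T → S))
    (hdiag : ∀ g : S, ∀ x ∈ M, (fun σ => g * x σ * g⁻¹) ∈ M)
    {p : T → S} (hp : ∀ x ∈ M, p * x * p⁻¹ ∈ M)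
    (hcomm : ∀ g : S, (fun σ => g * p σ * g⁻¹ * (p σ)⁻¹) ∈ M)
    (hinj : Function.Injective p) {σ : T} (hσ : p σ ≠ 1) (F : Finset T) (hF : σ ∉ F) :
    ∀ s : S, ∃ y ∈ M, (∀ τ ∈ F, y τ = 1) ∧ y σ = s := by
  classical
  induction F using Finset.induction_on with
  | empty =>
    obtain ⟨g, hg⟩ := exists_commutator_ne_one hnc hσ
    exact exists_of_ne_one M hdiag ∅ σ (hcomm g) (by simp) hg
  | insert τ F _ ih =>
    have hστ : σ ≠ τ := fun h => hF (by simp [h])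
    have hq : (p τ)⁻¹ * p σ ≠ 1 := fun h =>
      hστ (hinj (inv_mul_eq_one.1 h).symm)
    obtain ⟨g, hg⟩ := exists_commutator_ne_one hnc hq
    obtain ⟨x, hx, hxF, hxσ⟩ := ih (fun h => hF (Finset.mem_insert_of_mem h)) g
    -- the commutator of `x` and `q = (p τ)⁻¹ p`
    have hz := M.mul_mem hx (M.inv_mem (hdiag (p τ)⁻¹ _ (hp x hx)))
    refine exists_of_ne_one M hdiag (insert τ F) σ hz ?_ ?_
    · intro ρ hρ
      rcases Finset.mem_insert.1 hρ with rfl | hρ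
      · simp [mul_assoc]
      · simp [hxF ρ hρ]
    · simpa [hxσ, mul_assoc] using hg

theorem mem_of_commutators_mem {S T : Type*} [Group S] [IsSimpleGroup S] [Finite T]
    (hnc : ∃ a b : S, a * b ≠ b * a) (M : Subgroup (T → S))
    (hdiag : ∀ g : S, ∀ x ∈ M, (fun σ => g * x σ * g⁻¹) ∈ M)
    {p : T → S} (hp : ∀ x ∈ M, p * x * p⁻¹ ∈ M)
    (hcomm : ∀ g : S, (fun σ => g * p σ * g⁻¹ * (p σ)⁻¹) ∈ M) : p ∈ M := by
  classical
  -- `S ^ (range p)` is the group of functions constant on the level sets of `p`.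
  let φ : (Set.range p → S) →* (T → S) :=
    { toFun := fun f σ => f ⟨p σ, σ, rfl⟩
      map_one' := rfl
      map_mul' := fun _ _ => rfl }
  have : Fintype (Set.range p) := Fintype.ofFinite _
  have key : (Subtype.val : Set.range p → S) ∈ M.comap φ := by
    refine Subgroup.pi_mem_of_mulSingle_mem _ fun v => ?_
    by_cases hv : (v : S) = 1
    · rw [hv, Pi.mulSingle_one]
      exact Subgroup.one_mem _
    · obtain ⟨y, hy, hyF, hyv⟩ := exists_mem_of_injective hnc (M.comap φ)
        (fun g x hx => hdiag g _ hx) (p := Subtype.val) (fun x hx => hp _ hx)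
        (fun g => hcomm g) Subtype.val_injective hv (Finset.univ.erase v) (by simp) v
      convert hy
      funext w
      by_cases hw : w = v
      · subst hw
        simp [hyv]
      · rw [Pi.mulSingle_eq_of_ne hw, hyF w (by simp [hw])]
  exact key


/-- Let `G = ∏_{j=1}^t G^{(j)}` be a finite direct product of simple
non-commutative groups and `T` a nonempty finite set.  If a subgroup `H` of `G^T` is
normalized by the full diagonal subgroup `Δ^T(G)`, then every `h ∈ H` can be written as
`h = h_1 h_2 ⋯ h_t` with `h_j ∈ H ∩ (G^{(j)})^T` for each `j`; here `(G^{(j)})^T` consists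
of the tuples that are trivial in all factors other than the `j`-th one. -/
theorem subgroup_factors_through_simple_factors {t : ℕ} {Gj : Fin t → Type*}
    [∀ j, Group (Gj j)] [∀ j, IsSimpleGroup (Gj j)]
    (hnc : ∀ j, ∃ a b : Gj j, a * b ≠ b * a)
    {T : Type*} [Fintype T] [Nonempty T]
    (H : Subgroup (T → ∀ j, Gj j))
    (hH : ∀ g : ∀ j, Gj j, ∀ h ∈ H, (fun σ j => g j * h σ j * (g j)⁻¹) ∈ H) :
    ∀ h ∈ H, ∃ hs : Fin t → (T → ∀ j, Gj j),
      (∀ j, hs j ∈ H) ∧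
      (∀ j, ∀ σ : T, ∀ j' : Fin t, j' ≠ j → hs j σ j' = 1) ∧
      h = ((List.finRange t).map hs).prod := by
  classical
  intro h hh
  refine ⟨fun j σ => Pi.mulSingle j (h σ j), fun j => ?_, fun j σ j' hj => ?_, ?_⟩
  · let ψ : (T → Gj j) →* (T → ∀ j, Gj j) :=
      { toFun := fun f σ => Pi.mulSingle j (f σ)
        map_one' := by funext σ; simp
        map_mul' := fun f g => by funext σ; simp [Pi.mulSingle_mul] }
    refine mem_of_commutators_mem (p := fun σ => h σ j) (hnc j) (H.comap ψ) ?_ ?_ ?_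
    · intro g x hx
      rw [Subgroup.mem_comap]
      convert hH (Pi.mulSingle j g) _ hx using 1
      funext σ i
      by_cases hi : i = j
      · subst hi
        simp [ψ]
      · simp [ψ, hi]
    · intro x hx
      rw [Subgroup.mem_comap]
      convert H.mul_mem (H.mul_mem hh hx) (H.inv_mem hh) using 1
      funext σ i
      by_cases hi : i = j
      · subst hi
        simp [ψ]
      · simp [ψ, hi]
    · intro g
      rw [Subgroup.mem_comap]
      convert H.mul_mem (hH (Pi.mulSingle j g) h hh) (H.inv_mem hh) using 1
      funext σ i
      by_cases hi : i = j
      · subst hi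
        simp [ψ]
      · simp [ψ, hi]
  · exact Pi.mulSingle_eq_of_ne hj _
  · funext σ j
    let ev : (T → ∀ j, Gj j) →* Gj j :=
      (Pi.evalMonoidHom Gj j).comp (Pi.evalMonoidHom (fun _ : T => ∀ j, Gj j) σ)
    change h σ j = ev (List.prod _)
    rw [map_list_prod, List.map_map, List.prod_map_eq_pow_single j,
      List.count_eq_one_of_mem (List.nodup_finRange t) (List.mem_finRange j)]
    · simp [ev]
    · intro i hi _
      simp [ev, Pi.mulSingle_eq_of_ne hi.symm]
end

section
/- Let q be an odd prime, let u ∈ ℤ_q^× be a unit that is not a square in ℤ_q, and let e ≥ 1 be an integer. For integers b with 1 ≤ b ≤ q^e define M_b = [[1, b·u], [b, 1]], and for integers a with 1 ≤ a ≤ q^{e−1} define N_a = [[q·a·u, u], [1, q·a·u]] (entries viewed in ℤ_q). Then: (i) every M_b and every N_a lies in GL₂(ℤ_q); and (ii) for any two distinct matrices g ≠ g' from the family {M_b : 1 ≤ b ≤ q^e} ∪ {N_a : 1 ≤ a ≤ q^{e−1}}, the right cosets g·diag(q^e,1)·GL₂(ℤ_q) and g'·diag(q^e,1)·GL₂(ℤ_q)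 in GL₂(ℚ_q) are distinct. In particular this family produces q^{e−1}(q+1) pairwise distinct right GL₂(ℤ_q)-cosets inside the double coset GL₂(ℤ_q)·diag(q^e,1)·GL₂(ℤ_q). -/
/-!
The coset `M · diag(q^e, 1) · GL₂(ℤ_q)` determines the second column of `M` up to units modulo
`q^e`, that is, a point of the projective line over `ℤ/q^e`. In quantitative form: if `M` and `M'`
give the same coset, then the determinant formed by their second columns is divisible by `q^e`
(`norm_cross_le_of_coset_eq`).

The second column of `M_b` is the point `(bu : 1)` and that of `N_a` is `(1 : qa)`. The
determinants are `(b - b')u` for two `M`s, `q(a' - a)u²` for two `N`s, and a unit in the mixed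
case, so divisibility by `q^e` forces equal indices (`coset_famMat_injOn`). Distinctness of the
cosets and their number both follow from this injectivity.

That `det M_b = 1 - b²u` is a unit uses Hensel's lemma: if `b²u ≡ 1` modulo `q`, then `bu` is an
approximate square root of `u`, and `u` would be a square (`norm_one_sub_sq_mul`).
-/

/-- `A` belongs to `GL₂(ℤ_q)`: all entries of `A` lie in `ℤ_q` (i.e. have norm `≤ 1`) and
its determinant is a unit of `ℤ_q` (i.e. has norm `1`). -/
def GL2Zq (q : ℕ) [Fact q.Prime] (A : Matrix (Fin 2) (Fin 2) ℚ_[q]) : Prop :=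
  (∀ i j, ‖A i j‖ ≤ 1) ∧ ‖A.det‖ = 1

/-- The diagonal matrix `diag(q^e, 1)`. -/
noncomputable def Dmat (q : ℕ) [Fact q.Prime] (e : ℕ) : Matrix (Fin 2) (Fin 2) ℚ_[q] :=
  !![(q : ℚ_[q]) ^ e, 0; 0, 1]

/-- The family consisting of the matrices `M_b = [[1, b·u], [b, 1]]` for `1 ≤ b ≤ q^e`
and `N_a = [[q·a·u, u], [1, q·a·u]]` for `1 ≤ a ≤ q^(e-1)`. -/
noncomputable def MatFamily (q : ℕ) [Fact q.Prime] (u : ℤ_[q]) (e : ℕ) :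
    Set (Matrix (Fin 2) (Fin 2) ℚ_[q]) :=
  {M | (∃ b : ℕ, 1 ≤ b ∧ b ≤ q ^ e ∧
          M = !![1, (b : ℚ_[q]) * (u : ℚ_[q]); (b : ℚ_[q]), 1]) ∨
       (∃ a : ℕ, 1 ≤ a ∧ a ≤ q ^ (e - 1) ∧
          M = !![(q : ℚ_[q]) * (a : ℚ_[q]) * (u : ℚ_[q]), (u : ℚ_[q]);
                 1, (q : ℚ_[q]) * (a : ℚ_[q]) * (u : ℚ_[q])])}

/-- The coset `M · diag(q^e, 1) · GL₂(ℤ_q)`. -/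
def coset (q : ℕ) [Fact q.Prime] (e : ℕ) (M : Matrix (Fin 2) (Fin 2) ℚ_[q]) :
    Set (Matrix (Fin 2) (Fin 2) ℚ_[q]) :=
  {X | ∃ k, GL2Zq q k ∧ X = M * Dmat q e * k}

/-- The members of the family by index: `inl b` stands for `M_b` and `inr a` for `N_a`. -/
noncomputable def famMat (q : ℕ) [Fact q.Prime] (u : ℤ_[q]) :
    ℕ ⊕ ℕ → Matrix (Fin 2) (Fin 2) ℚ_[q]
  | .inl b => !![1, (b : ℚ_[q]) * (u : ℚ_[q]); (b : ℚ_[q]), 1]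
  | .inr a => !![(q : ℚ_[q]) * (a : ℚ_[q]) * (u : ℚ_[q]), (u : ℚ_[q]);
                 1, (q : ℚ_[q]) * (a : ℚ_[q]) * (u : ℚ_[q])]

/-- The indices allowed in the family: `1 ≤ b ≤ q^e` and `1 ≤ a ≤ q^(e-1)`. -/
def famIndex (q e : ℕ) : Finset (ℕ ⊕ ℕ) :=
  (Finset.Icc 1 (q ^ e)).disjSum (Finset.Icc 1 (q ^ (e - 1)))

lemma mem_matFamily_iff (q : ℕ) [Fact q.Prime] (u : ℤ_[q]) (e : ℕ)
    (M : Matrix (Fin 2) (Fin 2) ℚ_[q]) :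
    M ∈ MatFamily q u e ↔ ∃ i ∈ famIndex q e, famMat q u i = M := by
  simp only [MatFamily, famIndex, Set.mem_ofPred_eq, Sum.exists, Finset.inl_mem_disjSum,
    Finset.inr_mem_disjSum, Finset.mem_Icc, famMat, and_assoc, eq_comm]

lemma norm_natCast_le_one (q : ℕ) [Fact q.Prime] (n : ℕ) : ‖(n : ℚ_[q])‖ ≤ 1 := by
  simpa using Padic.norm_int_le_one (p := q) (n : ℤ)

lemma norm_one_sub_of_lt_one (q : ℕ) [Fact q.Prime] (x : ℚ_[q]) (hx : ‖x‖ < 1) :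
    ‖1 - x‖ = 1 := by
  have h := Padic.add_eq_max_of_ne (p := q) (q := 1) (r := -x) (by simpa using hx.ne')
  rw [← sub_eq_add_neg] at h
  rw [h]
  simpa using hx.le

lemma norm_one_sub_sq_mul (q : ℕ) [Fact q.Prime] (hq : Odd q) (u : ℤ_[q]) (hu : IsUnit u)
    (hsq : ¬ ∃ v : ℤ_[q], u = v ^ 2) (b : ℤ_[q]) : ‖1 - b ^ 2 * u‖ = 1 := by
  by_contra hne
  have hlt : ‖1 - b ^ 2 * u‖ < 1 := lt_of_le_of_ne (PadicInt.norm_le_one _) hne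
  have hu1 : ‖u‖ = 1 := PadicInt.isUnit_iff.mp hu
  have hb : IsUnit b := by
    have h1 : IsUnit (b ^ 2 * u) := by
      have := IsLocalRing.isUnit_or_isUnit_of_add_one
        (a := 1 - b ^ 2 * u) (b := b ^ 2 * u) (by ring)
      rcases this with h | h
      · exact absurd (PadicInt.isUnit_iff.mp h) hne
      · exact h
    exact (isUnit_pow_iff two_ne_zero).mp (isUnit_of_mul_isUnit_left h1)
  have hb1 : ‖b‖ = 1 := PadicInt.isUnit_iff.mp hb
  have h2 : ‖(2 : ℤ_[q])‖ = 1 := by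
    have : ‖((2 : ℕ) : ℤ_[q])‖ = 1 := by
      rw [PadicInt.norm_natCast_eq_one_iff]
      exact hq.coprime_two_right
    simpa using this
  -- Hensel's lemma for `X² - u` at the approximate root `bu`.
  obtain ⟨z, hz, -⟩ := hensels_lemma (p := q) (R := ℤ_[q])
    (F := (Polynomial.X ^ 2 - Polynomial.C u : Polynomial ℤ_[q])) (a := b * u) (by
      have e1 : (b * u) ^ 2 - u = -(u * (1 - b ^ 2 * u)) := by ring
      simpa [e1, hu1, hb1, one_add_one_eq_two, h2] using hlt)
  refine hsq ⟨z, ?_⟩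
  simp at hz
  exact (sub_eq_zero.mp hz).symm

lemma famMat_mem_GL2Zq (q : ℕ) [Fact q.Prime] (hq : Odd q) (u : ℤ_[q]) (hu : IsUnit u)
    (hsq : ¬ ∃ v : ℤ_[q], u = v ^ 2) (i : ℕ ⊕ ℕ) : GL2Zq q (famMat q u i) := by
  have hu1 : ‖(u : ℚ_[q])‖ = 1 := PadicInt.isUnit_iff.mp hu
  have hq1 : ‖(q : ℚ_[q])‖ < 1 := Padic.norm_p_lt_one
  rcases i with b | a
  · have hb := norm_natCast_le_one q b
    refine ⟨fun i j => ?_, ?_⟩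
    · fin_cases i <;> fin_cases j <;> simp [famMat, hu1, hb]
    · have h := norm_one_sub_sq_mul q hq u hu hsq b
      rw [← PadicInt.padic_norm_e_of_padicInt] at h
      push_cast at h
      rw [famMat, Matrix.det_fin_two_of]
      refine Eq.trans (congrArg norm ?_) h
      ring
  · have ha := norm_natCast_le_one q a
    have hqa : ‖(q : ℚ_[q])‖ * ‖(a : ℚ_[q])‖ < 1 :=
      mul_lt_one_of_nonneg_of_lt_one_left (norm_nonneg _) hq1 ha
    refine ⟨fun i j => ?_, ?_⟩
    · fin_cases i <;> fin_cases j <;> simp only [famMat] <;> simp [hu1, -Padic.norm_p] <;>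
        exact hqa.le
    · have e1 : (famMat q u (.inr a)).det =
          -(u * (1 - (q * a : ℚ_[q]) * (q * a : ℚ_[q]) * u)) := by
        rw [famMat, Matrix.det_fin_two_of]; ring
      rw [e1, norm_neg, norm_mul, hu1, one_mul]
      apply norm_one_sub_of_lt_one
      rw [norm_mul, norm_mul, hu1, mul_one, norm_mul]
      exact mul_lt_one_of_nonneg_of_lt_one_left (by positivity) hqa hqa.le

lemma GL2Zq_one (q : ℕ) [Fact q.Prime] : GL2Zq q 1 := by
  refine ⟨fun i j => ?_, by simp⟩
  fin_cases i <;> fin_cases j <;> simp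

/-- Matrices with the same coset have second columns that are proportional modulo `q^e`. -/
lemma norm_cross_le_of_coset_eq (q : ℕ) [Fact q.Prime] (e : ℕ)
    (M M' : Matrix (Fin 2) (Fin 2) ℚ_[q]) (hM' : GL2Zq q M')
    (h : coset q e M = coset q e M') :
    ‖M 0 1 * M' 1 1 - M 1 1 * M' 0 1‖ ≤ (q : ℝ) ^ (-e : ℤ) := by
  have hmem : M * Dmat q e ∈ coset q e M := ⟨1, GL2Zq_one q, by simp⟩
  rw [h] at hmem
  obtain ⟨k, hk, hX⟩ := hmem
  have h0 := congrFun (congrFun hX 0) 1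
  have h1 := congrFun (congrFun hX 1) 1
  simp [Dmat, Matrix.mul_apply, Fin.sum_univ_two] at h0 h1
  have e1 : M 0 1 * M' 1 1 - M 1 1 * M' 0 1 = (q : ℚ_[q]) ^ e * k 0 1 * M'.det := by
    rw [h0, h1, Matrix.det_fin_two]; ring
  rw [e1, norm_mul, hM'.2, mul_one, norm_mul, Padic.norm_p_pow]
  exact mul_le_of_le_one_right (by positivity) (hk.1 0 1)

lemma eq_of_norm_sub_le (q : ℕ) [Fact q.Prime] (n b c : ℕ) (hb : b ∈ Finset.Icc 1 (q ^ n))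
    (hc : c ∈ Finset.Icc 1 (q ^ n)) (h : ‖(b : ℚ_[q]) - c‖ ≤ (q : ℝ) ^ (-n : ℤ)) : b = c := by
  have h' : ‖(((b : ℤ) - c : ℤ) : ℚ_[q])‖ ≤ (q : ℝ) ^ (-n : ℤ) := by push_cast; exact h
  rw [Padic.norm_int_le_pow_iff_dvd] at h'
  rw [Finset.mem_Icc] at hb hc
  have h0 : (b : ℤ) - c = 0 := by
    apply Int.eq_zero_of_abs_lt_dvd h'
    rw [abs_lt]
    have hqn : ((q : ℤ) ^ n) = ((q ^ n : ℕ) : ℤ) := by push_cast; rfl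
    rw [hqn]
    omega
  omega

lemma coset_famMat_injOn (q : ℕ) [Fact q.Prime] (hq : Odd q) (u : ℤ_[q]) (hu : IsUnit u)
    (hsq : ¬ ∃ v : ℤ_[q], u = v ^ 2) (e : ℕ) (he : 1 ≤ e) :
    Set.InjOn (fun i => coset q e (famMat q u i)) (famIndex q e) := by
  have hu1 : ‖(u : ℚ_[q])‖ = 1 := PadicInt.isUnit_iff.mp hu
  have hq1 : ‖(q : ℚ_[q])‖ < 1 := Padic.norm_p_lt_one
  have hqgt : (1 : ℝ) < q := by exact_mod_cast (Fact.out : q.Prime).one_lt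
  have hqe : (q : ℝ) ^ (-e : ℤ) < 1 := zpow_lt_one_of_neg₀ hqgt (by omega)
  -- The point `(bu : 1)` differs from `(1 : qa)` already modulo `q`.
  have mixed : ∀ a b : ℕ, ‖(1 : ℚ_[q]) - q * a * (b * u)‖ = 1 := fun a b => by
    apply norm_one_sub_of_lt_one
    rw [norm_mul, norm_mul, norm_mul, hu1, mul_one, mul_assoc]
    exact mul_lt_one_of_nonneg_of_lt_one_left (norm_nonneg _) hq1
      (mul_le_one₀ (norm_natCast_le_one q a) (norm_nonneg _) (norm_natCast_le_one q b))
  intro i hi j hj hij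
  have key := norm_cross_le_of_coset_eq q e _ _ (famMat_mem_GL2Zq q hq u hu hsq j) hij
  rcases i with b | a <;> rcases j with b' | a' <;>
    simp only [famIndex, Finset.mem_coe, Finset.inl_mem_disjSum, Finset.inr_mem_disjSum]
      at hi hj <;>
    simp only [famMat, Matrix.of_apply, Matrix.cons_val_zero, Matrix.cons_val_one,
      Matrix.cons_val', Matrix.cons_val_fin_one] at key
  · congr 1
    apply eq_of_norm_sub_le q e b b' hi hj
    have e1 : (b * u * 1 - 1 * (b' * u) : ℚ_[q]) = (b - b') * u := by ring
    rwa [e1, norm_mul, hu1, mul_one] at key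
  · exfalso
    have e1 : (b * u * (q * a' * u) - 1 * u : ℚ_[q]) = -(u * (1 - q * a' * (b * u))) := by ring
    rw [e1, norm_neg, norm_mul, hu1, mixed, one_mul] at key
    exact absurd key (not_le.mpr hqe)
  · exfalso
    have e1 : (u * 1 - q * a * u * (b' * u) : ℚ_[q]) = u * (1 - q * a * (b' * u)) := by ring
    rw [e1, norm_mul, hu1, mixed, one_mul] at key
    exact absurd key (not_le.mpr hqe)
  · congr 1
    apply eq_of_norm_sub_le q (e - 1) a a' hi hj
    have e1 : (u * (q * a' * u) - q * a * u * u : ℚ_[q]) = -(q * (a - a') * u * u) := by ring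
    rw [e1, norm_neg, norm_mul, norm_mul, norm_mul, hu1, mul_one, mul_one, Padic.norm_p] at key
    have e2 : (q : ℝ) ^ (-e : ℤ) = (q : ℝ)⁻¹ * (q : ℝ) ^ (-(e - 1 : ℕ) : ℤ) := by
      rw [← zpow_neg_one, ← zpow_add₀ (by positivity)]
      congr 1
      omega
    rw [e2] at key
    exact le_of_mul_le_mul_left key (by positivity)

/-- Let `q` be an odd prime, `u ∈ ℤ_q^×` a non-square unit, `e ≥ 1`.
Then (i) every matrix of the family lies in `GL₂(ℤ_q)`; (ii) distinct matrices `g ≠ g'`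
of the family give distinct right cosets `g·diag(q^e,1)·GL₂(ℤ_q)` and
`g'·diag(q^e,1)·GL₂(ℤ_q)`; these cosets lie inside the double coset
`GL₂(ℤ_q)·diag(q^e,1)·GL₂(ℤ_q)`, and the family produces exactly `q^(e-1)(q+1)` pairwise
distinct right `GL₂(ℤ_q)`-cosets. -/
theorem family_gives_distinct_cosets (q : ℕ) [Fact q.Prime] (hq : Odd q)
    (u : ℤ_[q]) (hu : IsUnit u) (hsq : ¬ ∃ v : ℤ_[q], u = v ^ 2)
    (e : ℕ) (he : 1 ≤ e) :
    (∀ M ∈ MatFamily q u e, GL2Zq q M) ∧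
    (∀ M ∈ MatFamily q u e, ∀ M' ∈ MatFamily q u e, M ≠ M' →
      {X | ∃ k, GL2Zq q k ∧ X = M * Dmat q e * k} ≠
        {X | ∃ k, GL2Zq q k ∧ X = M' * Dmat q e * k}) ∧
    (∀ M ∈ MatFamily q u e, ∀ k, GL2Zq q k →
      ∃ U V, GL2Zq q U ∧ GL2Zq q V ∧ M * Dmat q e * k = U * Dmat q e * V) ∧
    Set.ncard {C : Set (Matrix (Fin 2) (Fin 2) ℚ_[q]) |
        ∃ M ∈ MatFamily q u e, C = {X | ∃ k, GL2Zq q k ∧ X = M * Dmat q e * k}} =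
      q ^ (e - 1) * (q + 1) := by
  have hinj := coset_famMat_injOn q hq u hu hsq e he
  have hGL : ∀ M ∈ MatFamily q u e, GL2Zq q M := by
    intro M hM
    obtain ⟨i, -, rfl⟩ := (mem_matFamily_iff q u e M).mp hM
    exact famMat_mem_GL2Zq q hq u hu hsq i
  refine ⟨hGL, ?_, fun M hM k hk => ⟨M, k, hGL M hM, hk, rfl⟩, ?_⟩
  · intro M hM M' hM' hne h
    obtain ⟨i, hi, rfl⟩ := (mem_matFamily_iff q u e M).mp hM
    obtain ⟨j, hj, rfl⟩ := (mem_matFamily_iff q u e M').mp hM'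
    exact hne (congrArg _ (hinj hi hj h))
  · have himg : {C : Set (Matrix (Fin 2) (Fin 2) ℚ_[q]) |
        ∃ M ∈ MatFamily q u e, C = {X | ∃ k, GL2Zq q k ∧ X = M * Dmat q e * k}} =
        (fun i => coset q e (famMat q u i)) '' (famIndex q e) := by
      ext C
      constructor
      · rintro ⟨M, hM, rfl⟩
        obtain ⟨i, hi, rfl⟩ := (mem_matFamily_iff q u e M).mp hM
        exact ⟨i, hi, rfl⟩
      · rintro ⟨i, hi, rfl⟩
        exact ⟨_, (mem_matFamily_iff q u e _).mpr ⟨i, hi, rfl⟩, rfl⟩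
    rw [himg, hinj.ncard_image, Set.ncard_coe_finset, famIndex,
      Finset.card_disjSum, Nat.card_Icc, Nat.card_Icc]
    obtain ⟨n, rfl⟩ : ∃ n, e = n + 1 := ⟨e - 1, by omega⟩
    simp only [Nat.add_sub_cancel]
    ring
end
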